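/- arXiv:1501.00721 — 3 statements merged into one kernel-verified Lean document; each statement's English description precedes it below -/
import Mathlib

section
/- Let O be a finite family of bounded nonempty objects in ℝ^d with density ρ ≥ 1. Then the intersection graph of O is (ρ−1)-degenerate: every nonempty induced subgraph of the intersection graph has a vertex of degree at most ρ−1. -/
/-!
In a finite set of objects pick one, `v`, of minimal diameter. All its neighbours in the set meet
`v` and are at least as large as `v`, so testing the density `ρ` on the bounded set `v` counts all
of them, and it counts `v` itself as well; hence there are at most `ρ - 1` neighbours.
-/

/-- A finite family `O` of subsets of `ℝ^d` has density at most `ρ` if every bounded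
subset `b` of `ℝ^d` intersects at most `ρ` members of `O` whose diameter is at least
the diameter of `b`. -/
def FamilyDensityLE (d : ℕ) (O : Set (Set (EuclideanSpace ℝ (Fin d)))) (ρ : ℝ) : Prop :=
  ∀ b : Set (EuclideanSpace ℝ (Fin d)), Bornology.IsBounded b →
    ({o ∈ O | (o ∩ b).Nonempty ∧ Metric.diam b ≤ Metric.diam o}.ncard : ℝ) ≤ ρ

/-- The intersection graph of a family of objects: vertices are the members of the family,
with an edge between two distinct objects iff they intersect. -/
def InterGraph {d : ℕ} (O : Set (Set (EuclideanSpace ℝ (Fin d)))) : SimpleGraph O :=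
  SimpleGraph.fromRel fun o o' => ((o : Set (EuclideanSpace ℝ (Fin d))) ∩ o').Nonempty

/-- The intersection graph of an indexed family of sets. Vertices are indices, so equal sets with
distinct indices are distinct vertices. -/
def intersectionGraph {ι X : Type*} (o : ι → Set X) : SimpleGraph ι :=
  SimpleGraph.fromRel fun i j => (o i ∩ o j).Nonempty

/-- Density at most `ρ` for an indexed family of sets in a pseudometric space. The family may be
infinite, so members are counted by `Set.encard`, which does not send infinite sets to `0`. -/
def HasDensityLE {ι X : Type*} [PseudoMetricSpace X] (o : ι → Set X) (ρ : ℕ∞) : Prop :=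
  ∀ b : Set X, Bornology.IsBounded b →
    {i | (o i ∩ b).Nonempty ∧ Metric.diam b ≤ Metric.diam (o i)}.encard ≤ ρ

/-- `k`-degeneracy of a graph. For infinite graphs this is the usual convention that only finite
subgraphs are tested; induced subgraphs suffice, since deleting edges lowers degrees. -/
def IsDegenerate {V : Type*} (G : SimpleGraph V) (k : ℕ) : Prop :=
  ∀ S : Set V, S.Finite → S.Nonempty → ∃ v ∈ S, {u ∈ S | G.Adj v u}.ncard ≤ k

theorem isDegenerate_of_encard_upper_neighbors_le {V α : Type*} [LinearOrder α]
    {G : SimpleGraph V} {k : ℕ} (f : V → α)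
    (h : ∀ v, {u | G.Adj v u ∧ f v ≤ f u}.encard ≤ k) : IsDegenerate G k := by
  intro S hfin hS
  obtain ⟨v, hv, hmin⟩ := S.exists_min_image f hfin hS
  have hsub : {u ∈ S | G.Adj v u} ⊆ {u | G.Adj v u ∧ f v ≤ f u} :=
    fun u hu => ⟨hu.2, hmin u hu.1⟩
  exact ⟨v, hv, (Set.encard_le_coe_iff_finite_ncard_le.1 <|
    (Set.encard_le_encard hsub).trans (h v)).2⟩

theorem intersectionGraph_adj {ι X : Type*} {o : ι → Set X} {i j : ι} :
    (intersectionGraph o).Adj i j ↔ i ≠ j ∧ (o i ∩ o j).Nonempty := by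
  rw [intersectionGraph, SimpleGraph.fromRel_adj, Set.inter_comm (o j), or_self]

section PseudoMetricSpace

variable {ι X : Type*} [PseudoMetricSpace X] {o : ι → Set X}

theorem HasDensityLE.encard_larger_neighbors_add_one_le {ρ : ℕ∞} (h : HasDensityLE o ρ) {i : ι}
    (hbdd : Bornology.IsBounded (o i)) (hne : (o i).Nonempty) :
    {j | (intersectionGraph o).Adj i j ∧ Metric.diam (o i) ≤ Metric.diam (o j)}.encard + 1 ≤ ρ := by
  set N := {j | (intersectionGraph o).Adj i j ∧ Metric.diam (o i) ≤ Metric.diam (o j)}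
  have hi : i ∉ N := fun hi => hi.1.ne rfl
  have hsub : insert i N ⊆
      {j | (o j ∩ o i).Nonempty ∧ Metric.diam (o i) ≤ Metric.diam (o j)} := by
    rintro j (rfl | ⟨hadj, hdiam⟩)
    · exact ⟨by rwa [Set.inter_self], le_rfl⟩
    · exact ⟨Set.inter_comm (o i) (o j) ▸ (intersectionGraph_adj.1 hadj).2, hdiam⟩
  calc N.encard + 1 = (insert i N).encard := (Set.encard_insert_of_notMem hi).symm
    _ ≤ _ := Set.encard_le_encard hsub
    _ ≤ ρ := h (o i) hbdd

theorem HasDensityLE.encard_larger_neighbors_le {k : ℕ} (h : HasDensityLE o (k + 1)) {i : ι}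
    (hbdd : Bornology.IsBounded (o i)) :
    {j | (intersectionGraph o).Adj i j ∧ Metric.diam (o i) ≤ Metric.diam (o j)}.encard ≤ k := by
  rcases (o i).eq_empty_or_nonempty with hempty | hne
  · simp [intersectionGraph_adj, hempty]
  · exact (ENat.add_le_add_iff_right ENat.one_ne_top).1
      (h.encard_larger_neighbors_add_one_le hbdd hne)

theorem stmt0_general {k : ℕ} (hbdd : ∀ i, Bornology.IsBounded (o i))
    (hdens : HasDensityLE o (k + 1)) : IsDegenerate (intersectionGraph o) k :=
  isDegenerate_of_encard_upper_neighbors_le (fun i => Metric.diam (o i))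
    fun i => hdens.encard_larger_neighbors_le (hbdd i)

end PseudoMetricSpace

theorem familyDensityLE_natCast_iff {d : ℕ} {O : Set (Set (EuclideanSpace ℝ (Fin d)))}
    (hfin : O.Finite) {n : ℕ} :
    FamilyDensityLE d O n ↔ HasDensityLE ((↑) : O → Set (EuclideanSpace ℝ (Fin d))) n := by
  refine forall₂_congr fun b _ => ?_
  have hencard : {o : O | (o.1 ∩ b).Nonempty ∧ Metric.diam b ≤ Metric.diam o.1}.encard =
      {o ∈ O | (o ∩ b).Nonempty ∧ Metric.diam b ≤ Metric.diam o}.encard :=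
    (Subtype.val_injective.encard_image _).symm.trans <| congrArg Set.encard <|
      Subtype.image_preimage_coe O {o | (o ∩ b).Nonempty ∧ Metric.diam b ≤ Metric.diam o}
  rw [Nat.cast_le, ← Nat.cast_le (α := ℕ∞), (hfin.sep _).cast_ncard_eq, ← hencard]

/-- the intersection graph of a finite family of bounded nonempty objects
of density `ρ ≥ 1` in `ℝ^d` is `(ρ-1)`-degenerate: every nonempty induced subgraph has a
vertex of degree at most `ρ - 1`. -/
theorem stmt0 (d : ℕ) (O : Set (Set (EuclideanSpace ℝ (Fin d)))) (hfin : O.Finite)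
    (hbdd : ∀ o ∈ O, Bornology.IsBounded o) (hne : ∀ o ∈ O, o.Nonempty)
    (ρ : ℕ) (hρ : 1 ≤ ρ) (hdens : FamilyDensityLE d O (ρ : ℝ)) :
    ∀ S : Set ↥O, S.Nonempty →
      ∃ v ∈ S, ({u ∈ S | (InterGraph O).Adj v u}).ncard ≤ ρ - 1 := by
  obtain ⟨k, rfl⟩ := Nat.exists_eq_add_of_le' hρ
  have : Finite O := hfin
  exact fun S => stmt0_general (fun o : O => hbdd o o.2)
    ((familyDensityLE_natCast_iff hfin).1 hdens) S S.toFinite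
end

section
/- There exists a constant C depending only on d such that: if G is the intersection graph of a finite family of bounded nonempty objects in ℝ^d with density ρ, then for every integer r ≥ 1, the r-shallow density satisfies ∇_r(G) ≤ C·ρ·(r+1)^C. -/
/-- A graph is `t`-shallow if some vertex reaches every other vertex by a path of at most
`t` edges (graph radius at most `t`). -/
def IsShallowGraph {V : Type*} (G : SimpleGraph V) (t : ℕ) : Prop :=
  ∃ h : V, ∀ v : V, G.Reachable h v ∧ G.dist h v ≤ t

/-- `H` is a `t`-shallow minor of `G`: vertices of `H` correspond to pairwise disjoint
clusters of vertices of `G`, each inducing a connected `t`-shallow subgraph, and edges of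
`H` only join clusters joined by an edge of `G`. -/
def IsShallowMinor {V W : Type*} (G : SimpleGraph V) (H : SimpleGraph W) (t : ℕ) : Prop :=
  ∃ cl : W → Set V,
    (Pairwise fun w w' => Disjoint (cl w) (cl w')) ∧
    (∀ w, IsShallowGraph (G.induce (cl w)) t) ∧
    (∀ w w', H.Adj w w' → ∃ u ∈ cl w, ∃ v ∈ cl w', G.Adj u v)

/-- `∇_r(G) ≤ x`: every `r`-shallow minor `H` of `G` (on a finite vertex set) satisfies
`|E(H)| ≤ x·|V(H)|`. -/
def NablaLE {V : Type*} (G : SimpleGraph V) (r : ℕ) (x : ℝ) : Prop :=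
  ∀ (W : Type) [Fintype W] (H : SimpleGraph W),
    IsShallowMinor G H r → (H.edgeSet.ncard : ℝ) ≤ x * (Fintype.card W : ℝ)

/-!
Charge every edge of the shallow minor to the endpoint whose cluster covers the region `U` of
smaller diameter `δ`, and put `s = δ / (2 r + 1)`. The objects of a cluster are pairwise linked by
chains of at most `2 r + 1` objects, so the largest object of a neighbouring cluster of diameter at
least `δ` has diameter at least `s`. Walking along a chain from an object touching `U` towards it,
the first object of diameter at least `s` is reached through at most `2 r` smaller ones, hence
within the ball of radius `(4 r + 1) s` around any point of `U`. This ball is covered by at most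
`(16 r + 5) ^ d` balls of diameter at most `s`, each of which meets at most `ρ` objects of diameter
at least `s`. As clusters are disjoint, a vertex is charged at most `(16 r + 5) ^ d * ρ` times.
-/

open Metric MeasureTheory Module
open scoped ENNReal NNReal

section Covering

variable {E : Type*} [NormedAddCommGroup E] [NormedSpace ℝ E] [FiniteDimensional ℝ E]

theorem card_le_of_isSeparated_of_subset_closedBall {ε : ℝ≥0} (hε : 0 < ε) {R : ℝ} (hR : 0 ≤ R)
    {x : E} {t : Finset E} (hsep : IsSeparated ε (t : Set E))
    (hsub : (t : Set E) ⊆ closedBall x R) :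
    (t.card : ℝ) ≤ (2 * R / ε + 1) ^ finrank ℝ E := by
  borelize E
  let μ : Measure E := Measure.addHaar
  have hε' : (0 : ℝ) < ε := hε
  have hdisj : (t : Set E).PairwiseDisjoint fun y ↦ closedBall y (ε / 2 : ℝ) := by
    intro y hy z hz hyz
    have hdist : (ε : ℝ) < dist y z := by
      have h : (ε : ℝ≥0∞) < edist y z := hsep hy hz hyz
      rwa [edist_nndist, ENNReal.coe_lt_coe, ← NNReal.coe_lt_coe, coe_nndist] at h
    exact closedBall_disjoint_closedBall (by linarith)
  have hunion : ⋃ y ∈ t, closedBall y (ε / 2 : ℝ) ⊆ closedBall x (R + ε / 2) :=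
    Set.iUnion₂_subset fun y hy ↦ closedBall_subset_closedBall' (by
      have := mem_closedBall.1 (hsub hy)
      linarith)
  have hvol : t.card * ((ε / 2 : ℝ) ^ finrank ℝ E * μ.real (ball 0 1))
      ≤ (R + ε / 2) ^ finrank ℝ E * μ.real (ball 0 1) := calc
    _ = ∑ y ∈ t, μ.real (closedBall y (ε / 2 : ℝ)) := by
      simp [Measure.addHaar_real_closedBall μ _ (half_pos hε').le]
    _ = μ.real (⋃ y ∈ t, closedBall y (ε / 2 : ℝ)) :=
      (measureReal_biUnion_finset hdisj (fun _ _ ↦ measurableSet_closedBall)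
        fun _ _ ↦ measure_closedBall_lt_top.ne).symm
    _ ≤ μ.real (closedBall x (R + ε / 2)) := measureReal_mono hunion measure_closedBall_lt_top.ne
    _ = _ := Measure.addHaar_real_closedBall μ x (by positivity)
  have hunit : 0 < μ.real (ball (0 : E) 1) :=
    ENNReal.toReal_pos (measure_ball_pos μ 0 one_pos).ne' measure_ball_lt_top.ne
  have hratio : (R + ε / 2) / (ε / 2) = 2 * R / ε + 1 := by field_simp
  rwa [← mul_assoc, mul_le_mul_iff_left₀ hunit, ← le_div_iff₀ (by positivity), ← div_pow,
    hratio] at hvol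

theorem packingNumber_closedBall_le {ε : ℝ≥0} (hε : 0 < ε) {R : ℝ} (hR : 0 ≤ R) (x : E) :
    packingNumber ε (closedBall x R) ≤ ⌊(2 * R / ε + 1) ^ finrank ℝ E⌋₊ := by
  refine iSup_le fun C ↦ iSup₂_le fun hC hsep ↦ ?_
  by_contra! hlt
  obtain ⟨t, htC, ht⟩ := Set.exists_subset_encard_eq (Order.add_one_le_of_lt hlt)
  lift t to Finset E using Set.finite_of_encard_eq_coe (by exact_mod_cast ht)
  have hcard := card_le_of_isSeparated_of_subset_closedBall hε hR (hsep.subset htC) (htC.trans hC)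
  rw [Set.encard_coe_eq_coe_finsetCard] at ht
  have ht' : t.card = ⌊(2 * R / ε + 1) ^ finrank ℝ E⌋₊ + 1 := by exact_mod_cast ht
  have := Nat.le_floor hcard
  omega

theorem exists_finset_closedBall_subset_biUnion_closedBall {ε k : ℝ} (hε : 0 ≤ ε) (hk : 0 ≤ k)
    (x : E) :
    ∃ t : Finset E, (t.card : ℝ) ≤ (2 * k + 1) ^ finrank ℝ E ∧
      closedBall x (k * ε) ⊆ ⋃ y ∈ t, closedBall y ε := by
  obtain rfl | hε := hε.eq_or_lt
  · exact ⟨{x}, by simpa using one_le_pow₀ (by linarith), by simp⟩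
  lift ε to ℝ≥0 using hε.le
  have hbound := (coveringNumber_le_packingNumber ε _).trans
    (packingNumber_closedBall_le (mod_cast hε) (by positivity : 0 ≤ k * ε) x)
  obtain ⟨t, -, hfin, hcover, ht⟩ := exists_set_encard_eq_coveringNumber
    (ne_top_of_le_ne_top (ENat.natCast_ne_top _) hbound)
  lift t to Finset E using hfin
  refine ⟨t, ?_, by exact_mod_cast hcover.subset_iUnion_closedBall⟩
  rw [← ht, Set.encard_coe_eq_coe_finsetCard, Nat.cast_le, Nat.le_floor_iff (by positivity)]
    at hbound
  rwa [← mul_assoc, mul_div_cancel_right₀ _ hε.ne'] at hbound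

end Covering

namespace FamilyDensityLE

variable {d : ℕ} {O : Set (Set (EuclideanSpace ℝ (Fin d)))} {ρ s : ℝ}

theorem nonneg (hρ : FamilyDensityLE d O ρ) : 0 ≤ ρ :=
  (Nat.cast_nonneg _).trans (hρ ∅ Bornology.isBounded_empty)

theorem ncard_le_card_mul (hρ : FamilyDensityLE d O ρ) (hO : O.Finite) {ι : Type*} (t : Finset ι)
    {b : Set (EuclideanSpace ℝ (Fin d))} {c : ι → Set (EuclideanSpace ℝ (Fin d))}
    (hbdd : ∀ i ∈ t, Bornology.IsBounded (c i)) (hdiam : ∀ i ∈ t, diam (c i) ≤ s)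
    (hcover : b ⊆ ⋃ i ∈ t, c i) :
    ({o ∈ O | (o ∩ b).Nonempty ∧ s ≤ diam o}.ncard : ℝ) ≤ t.card * ρ := by
  let T (i : ι) := {o ∈ O | (o ∩ c i).Nonempty ∧ diam (c i) ≤ diam o}
  have hsub : {o ∈ O | (o ∩ b).Nonempty ∧ s ≤ diam o} ⊆ ⋃ i ∈ t, T i := by
    rintro o ⟨ho, ⟨x, hxo, hxb⟩, hs⟩
    obtain ⟨i, hi, hxi⟩ := Set.mem_iUnion₂.1 (hcover hxb)
    exact Set.mem_biUnion hi ⟨ho, ⟨x, hxo, hxi⟩, (hdiam i hi).trans hs⟩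
  have hfin : (⋃ i ∈ t, T i).Finite := hO.subset (Set.iUnion₂_subset fun _ _ ↦ Set.sep_subset _ _)
  calc ({o ∈ O | (o ∩ b).Nonempty ∧ s ≤ diam o}.ncard : ℝ)
    _ ≤ ∑ i ∈ t, ((T i).ncard : ℝ) := by
      exact_mod_cast (Set.ncard_le_ncard hsub hfin).trans (t.set_ncard_biUnion_le T)
    _ ≤ ∑ _i ∈ t, ρ := Finset.sum_le_sum fun i hi ↦ hρ _ (hbdd i hi)
    _ = t.card * ρ := by rw [Finset.sum_const, nsmul_eq_mul]

theorem ncard_closedBall_le (hρ : FamilyDensityLE d O ρ) (hO : O.Finite) (hs : 0 ≤ s) {k : ℝ}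
    (hk : 0 ≤ k) (p : EuclideanSpace ℝ (Fin d)) :
    ({o ∈ O | (o ∩ closedBall p (k * s)).Nonempty ∧ s ≤ diam o}.ncard : ℝ)
      ≤ (4 * k + 1) ^ d * ρ := by
  obtain ⟨t, ht, hcover⟩ := exists_finset_closedBall_subset_biUnion_closedBall
    (by positivity : 0 ≤ s / 2) (by positivity : 0 ≤ 2 * k) p
  rw [show 2 * k * (s / 2) = k * s by ring] at hcover
  rw [finrank_euclideanSpace_fin, show 2 * (2 * k) = 4 * k by ring] at ht
  have hdiam (y : EuclideanSpace ℝ (Fin d)) : diam (closedBall y (s / 2)) ≤ s :=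
    (diam_closedBall (by positivity)).trans_eq (by ring)
  exact (hρ.ncard_le_card_mul hO t (fun _ _ ↦ isBounded_closedBall) (fun y _ ↦ hdiam y)
    hcover).trans (mul_le_mul_of_nonneg_right ht hρ.nonneg)

end FamilyDensityLE

section Chains

variable {V X : Type*} [PseudoMetricSpace X] {G : SimpleGraph V} {A : V → Set X} {s : ℝ}

theorem dist_le_of_walk (hbdd : ∀ v, Bornology.IsBounded (A v))
    (hadj : ∀ u v, G.Adj u v → (A u ∩ A v).Nonempty) (hs : ∀ v, diam (A v) ≤ s) {u v : V}
    (W : G.Walk u v) {x y : X} (hx : x ∈ A u) (hy : y ∈ A v) :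
    dist x y ≤ (W.length + 1) * s := by
  induction W generalizing x with
  | @nil u => simpa using (dist_le_diam_of_mem (hbdd u) hx hy).trans (hs u)
  | @cons u c v huc W ih =>
    obtain ⟨z, hzu, hzc⟩ := hadj u c huc
    calc dist x y
      _ ≤ dist x z + dist z y := dist_triangle x z y
      _ ≤ s + (W.length + 1) * s :=
        add_le_add ((dist_le_diam_of_mem (hbdd u) hx hzu).trans (hs u)) (ih hzc hy)
      _ = ((SimpleGraph.Walk.cons huc W).length + 1) * s := by
        rw [SimpleGraph.Walk.length_cons]; push_cast; ring

theorem exists_le_diam_dist_le_of_walk (hbdd : ∀ v, Bornology.IsBounded (A v))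
    (hadj : ∀ u v, G.Adj u v → (A u ∩ A v).Nonempty) (hs : 0 ≤ s) {u v : V} (W : G.Walk u v)
    (hv : s ≤ diam (A v)) {x : X} (hx : x ∈ A u) :
    ∃ w, s ≤ diam (A w) ∧ ∃ y ∈ A w, dist y x ≤ W.length * s := by
  induction W generalizing x with
  | @nil u => exact ⟨u, hv, x, hx, by simp⟩
  | @cons u c v huc W ih =>
    obtain hu | hu := le_total s (diam (A u))
    · exact ⟨u, hu, x, hx, by rw [dist_self]; positivity⟩
    obtain ⟨z, hzu, hzc⟩ := hadj u c huc
    obtain ⟨w, hw, y, hy, hyz⟩ := ih hv hzc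
    refine ⟨w, hw, y, hy, ?_⟩
    calc dist y x
      _ ≤ dist y z + dist z x := dist_triangle y z x
      _ ≤ W.length * s + s := add_le_add hyz ((dist_le_diam_of_mem (hbdd u) hzu hx).trans hu)
      _ = (SimpleGraph.Walk.cons huc W).length * s := by
        rw [SimpleGraph.Walk.length_cons]; push_cast; ring

namespace IsShallowGraph

variable {t : ℕ}

theorem exists_walk_length_le (hG : IsShallowGraph G t) (u v : V) :
    ∃ W : G.Walk u v, W.length ≤ 2 * t := by
  obtain ⟨h, hh⟩ := hG
  obtain ⟨P, hP⟩ := (hh u).1.exists_walk_length_eq_dist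
  obtain ⟨Q, hQ⟩ := (hh v).1.exists_walk_length_eq_dist
  refine ⟨P.reverse.append Q, ?_⟩
  rw [SimpleGraph.Walk.length_append, SimpleGraph.Walk.length_reverse, hP, hQ, two_mul]
  exact add_le_add (hh u).2 (hh v).2

theorem exists_diam_iUnion_le [Finite V] (hG : IsShallowGraph G t)
    (hbdd : ∀ v, Bornology.IsBounded (A v)) (hadj : ∀ u v, G.Adj u v → (A u ∩ A v).Nonempty) :
    ∃ v, diam (⋃ u, A u) ≤ (2 * t + 1) * diam (A v) := by
  have : Nonempty V := ⟨hG.choose⟩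
  obtain ⟨v, hv⟩ := Finite.exists_max fun v ↦ diam (A v)
  refine ⟨v, diam_le_of_forall_dist_le (mul_nonneg (by positivity) diam_nonneg)
    fun x hx y hy ↦ ?_⟩
  obtain ⟨a, hxa⟩ := Set.mem_iUnion.1 hx
  obtain ⟨b, hyb⟩ := Set.mem_iUnion.1 hy
  obtain ⟨W, hW⟩ := hG.exists_walk_length_le a b
  have hW' : (W.length : ℝ) ≤ 2 * t := by exact_mod_cast hW
  exact (dist_le_of_walk hbdd hadj hv W hxa hyb).trans
    (mul_le_mul_of_nonneg_right (by linarith) diam_nonneg)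

theorem exists_le_diam_dist_le [Finite V] (hG : IsShallowGraph G t)
    (hbdd : ∀ v, Bornology.IsBounded (A v)) (hadj : ∀ u v, G.Adj u v → (A u ∩ A v).Nonempty)
    (hs : 0 ≤ s) (hdiam : (2 * t + 1) * s ≤ diam (⋃ v, A v)) {u : V} {x : X} (hx : x ∈ A u) :
    ∃ w, s ≤ diam (A w) ∧ ∃ y ∈ A w, dist y x ≤ 2 * t * s := by
  obtain ⟨v, hv⟩ := hG.exists_diam_iUnion_le hbdd hadj
  obtain ⟨W, hW⟩ := hG.exists_walk_length_le u v
  have hsv : s ≤ diam (A v) := le_of_mul_le_mul_left (hdiam.trans hv) (by positivity)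
  obtain ⟨w, hw, y, hy, hyx⟩ := exists_le_diam_dist_le_of_walk hbdd hadj hs W hsv hx
  have hW' : (W.length : ℝ) ≤ 2 * t := by exact_mod_cast hW
  exact ⟨w, hw, y, hy, hyx.trans (by gcongr)⟩

end IsShallowGraph

end Chains

theorem ncard_edgeSet_le_mul_card_of_forall_ncard_le {W α : Type*} [Fintype W] [LinearOrder α]
    (H : SimpleGraph W) (D : W → α) {N : ℝ}
    (hN : ∀ w, ({w' | H.Adj w w' ∧ D w ≤ D w'}.ncard : ℝ) ≤ N) :
    (H.edgeSet.ncard : ℝ) ≤ N * Fintype.card W := by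
  let S (w : W) := {w' | H.Adj w w' ∧ D w ≤ D w'}
  have hsub : H.edgeSet ⊆ ⋃ w, (s(w, ·)) '' S w := by
    intro e
    induction e with | _ a b
    intro hab
    obtain hle | hle := le_total (D a) (D b)
    · exact Set.mem_iUnion.2 ⟨a, b, ⟨hab, hle⟩, rfl⟩
    · exact Set.mem_iUnion.2 ⟨b, a, ⟨hab.symm, hle⟩, Sym2.eq_swap⟩
  have hcard : H.edgeSet.ncard ≤ ∑ w, (S w).ncard := calc
    _ ≤ (⋃ w, (s(w, ·)) '' S w).ncard := Set.ncard_le_ncard hsub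
    _ ≤ ∑ w, ((s(w, ·)) '' S w).ncard := Set.ncard_iUnion_le_of_fintype _
    _ ≤ ∑ w, (S w).ncard := Finset.sum_le_sum fun w _ ↦ Set.ncard_image_le
  calc (H.edgeSet.ncard : ℝ)
    _ ≤ ∑ w, ((S w).ncard : ℝ) := by exact_mod_cast hcard
    _ ≤ ∑ _w : W, N := Finset.sum_le_sum fun w _ ↦ hN w
    _ = N * Fintype.card W := by simp [mul_comm]

section IntersectionGraph

variable {d : ℕ} {O : Set (Set (EuclideanSpace ℝ (Fin d)))} {S T : Set O}

theorem inter_nonempty_of_interGraph_adj {u v : O} (h : (InterGraph O).Adj u v) :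
    (u.1 ∩ v.1).Nonempty :=
  h.2.elim id fun hvu ↦ Set.inter_comm v.1 u.1 ▸ hvu

/-- The part of space covered by a cluster `S` of objects. Its diameter orders the clusters of a
shallow minor. -/
def clusterRegion (S : Set O) : Set (EuclideanSpace ℝ (Fin d)) :=
  ⋃ o : S, o.1.1

theorem isBounded_clusterRegion (hO : O.Finite) (hbdd : ∀ o ∈ O, Bornology.IsBounded o) :
    Bornology.IsBounded (clusterRegion S) :=
  have := hO.to_subtype
  Bornology.isBounded_iUnion.2 fun o ↦ hbdd o.1 o.1.2

theorem mem_clusterRegion {o : O} (ho : o ∈ S) {x : EuclideanSpace ℝ (Fin d)} (hx : x ∈ o.1) :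
    x ∈ clusterRegion S :=
  Set.mem_iUnion.2 ⟨⟨o, ho⟩, hx⟩

theorem exists_mem_le_diam_inter_closedBall_nonempty (hO : O.Finite)
    (hbdd : ∀ o ∈ O, Bornology.IsBounded o) {r : ℕ}
    (hshallow : IsShallowGraph ((InterGraph O).induce T) r) {s : ℝ}
    (hS : diam (clusterRegion S) ≤ (2 * r + 1) * s) (hT : (2 * r + 1) * s ≤ diam (clusterRegion T))
    (hadj : ∃ u ∈ S, ∃ v ∈ T, (InterGraph O).Adj u v)
    {p : EuclideanSpace ℝ (Fin d)} (hp : p ∈ clusterRegion S) :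
    ∃ o ∈ T, (o.1 ∩ closedBall p ((4 * r + 1) * s)).Nonempty ∧ s ≤ diam o.1 := by
  have := hO.to_subtype
  have hs : 0 ≤ s := le_of_mul_le_mul_left
    (by simpa using diam_nonneg.trans hS) (by positivity : (0 : ℝ) < 2 * r + 1)
  obtain ⟨u, hu, v, hv, huv⟩ := hadj
  obtain ⟨q, hqu, hqv⟩ := inter_nonempty_of_interGraph_adj huv
  have hqp : dist q p ≤ (2 * r + 1) * s :=
    (dist_le_diam_of_mem (isBounded_clusterRegion hO hbdd) (mem_clusterRegion hu hqu) hp).trans hS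
  obtain ⟨o, ho, y, hyo, hyq⟩ := hshallow.exists_le_diam_dist_le (A := fun o : T ↦ o.1.1)
    (fun o ↦ hbdd o.1 o.1.2) (fun _ _ ↦ inter_nonempty_of_interGraph_adj) hs hT (u := ⟨v, hv⟩) hqv
  refine ⟨o, o.2, ⟨y, hyo, mem_closedBall.2 ?_⟩, ho⟩
  calc dist y p
    _ ≤ dist y q + dist q p := dist_triangle y q p
    _ ≤ 2 * r * s + (2 * r + 1) * s := add_le_add hyq hqp
    _ = (4 * r + 1) * s := by ring

theorem ncard_adj_diam_clusterRegion_le {ρ : ℝ} (hO : O.Finite)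
    (hbdd : ∀ o ∈ O, Bornology.IsBounded o) (hρ : FamilyDensityLE d O ρ) {r : ℕ} {W : Type*}
    {H : SimpleGraph W} {cl : W → Set O} (hdisj : Pairwise fun w w' ↦ Disjoint (cl w) (cl w'))
    (hshallow : ∀ w, IsShallowGraph ((InterGraph O).induce (cl w)) r)
    (hadj : ∀ w w', H.Adj w w' → ∃ u ∈ cl w, ∃ v ∈ cl w', (InterGraph O).Adj u v)
    {w : W} (hw : (clusterRegion (cl w)).Nonempty) :
    ({w' | H.Adj w w' ∧ diam (clusterRegion (cl w)) ≤ diam (clusterRegion (cl w'))}.ncard : ℝ)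
      ≤ (16 * r + 5) ^ d * ρ := by
  obtain ⟨p, hp⟩ := hw
  set δ := diam (clusterRegion (cl w))
  let s := δ / (2 * r + 1)
  have hs : 0 ≤ s := div_nonneg diam_nonneg (by positivity)
  have hδs : δ = (2 * r + 1) * s := (mul_div_cancel₀ δ (by positivity)).symm
  have hlarge (w' : W) (hw' : H.Adj w w' ∧ δ ≤ diam (clusterRegion (cl w'))) :=
    exists_mem_le_diam_inter_closedBall_nonempty hO hbdd (hshallow w') hδs.le
      (hδs.ge.trans hw'.2) (hadj w w' hw'.1) hp
  have : Nonempty O := ⟨(hshallow w).choose⟩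
  choose! g hgcl hg using hlarge
  have hmem : ∀ w' ∈ {w' | H.Adj w w' ∧ δ ≤ diam (clusterRegion (cl w'))},
      (g w').1 ∈ {o ∈ O | (o ∩ closedBall p ((4 * r + 1) * s)).Nonempty ∧ s ≤ diam o} :=
    fun w' hw' ↦ ⟨(g w').2, hg w' hw'⟩
  have hinj :
      Set.InjOn (fun w' ↦ (g w').1) {w' | H.Adj w w' ∧ δ ≤ diam (clusterRegion (cl w'))} := by
    intro a ha b hb hab
    by_contra hne
    exact Set.disjoint_left.1 (hdisj hne) (hgcl a ha) (Subtype.ext hab ▸ hgcl b hb)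
  calc ({w' | H.Adj w w' ∧ δ ≤ diam (clusterRegion (cl w'))}.ncard : ℝ)
    _ ≤ {o ∈ O | (o ∩ closedBall p ((4 * r + 1) * s)).Nonempty ∧ s ≤ diam o}.ncard := by
      exact_mod_cast Set.ncard_le_ncard_of_injOn _ hmem hinj (hO.subset (Set.sep_subset _ _))
    _ ≤ (4 * (4 * r + 1) + 1) ^ d * ρ := hρ.ncard_closedBall_le hO hs (by positivity) p
    _ = (16 * r + 5) ^ d * ρ := by ring

theorem nablaLE_interGraph {ρ : ℝ} (hO : O.Finite) (hbdd : ∀ o ∈ O, Bornology.IsBounded o)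
    (hne : ∀ o ∈ O, o.Nonempty) (hρ : FamilyDensityLE d O ρ) (r : ℕ) :
    NablaLE (InterGraph O) r ((16 * r + 5) ^ d * ρ) := by
  intro W _ H ⟨cl, hdisj, hshallow, hadj⟩
  refine ncard_edgeSet_le_mul_card_of_forall_ncard_le H
    (fun w ↦ diam (clusterRegion (cl w))) fun w ↦ ?_
  obtain ⟨c, -⟩ := hshallow w
  obtain ⟨p, hp⟩ := hne c.1 c.1.2
  exact ncard_adj_diam_clusterRegion_le hO hbdd hρ hdisj hshallow hadj
    ⟨p, mem_clusterRegion c.2 hp⟩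

end IntersectionGraph

theorem NablaLE.mono {V : Type*} {G : SimpleGraph V} {r : ℕ} {x y : ℝ} (h : NablaLE G r x)
    (hxy : x ≤ y) : NablaLE G r y :=
  fun W _ H hH ↦ (h W H hH).trans (mul_le_mul_of_nonneg_right hxy (Nat.cast_nonneg _))

/-- there is a constant `C = C(d)` such that the intersection graph `G` of a
finite family of bounded nonempty objects of density `ρ` in `ℝ^d` satisfies
`∇_r(G) ≤ C·ρ·(r+1)^C` for all `r ≥ 1`. -/
theorem stmt4 (d : ℕ) :
    ∃ C : ℕ, 0 < C ∧
      ∀ (O : Set (Set (EuclideanSpace ℝ (Fin d)))) (ρ : ℝ),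
        O.Finite → (∀ o ∈ O, Bornology.IsBounded o) → (∀ o ∈ O, o.Nonempty) →
        FamilyDensityLE d O ρ →
        ∀ r : ℕ, 1 ≤ r →
          NablaLE (InterGraph O) r ((C : ℝ) * ρ * ((r : ℝ) + 1) ^ C) := by
  refine ⟨16 ^ d + d, by positivity, fun O ρ hO hbdd hne hρ r _ ↦
    (nablaLE_interGraph hO hbdd hne hρ r).mono ?_⟩
  have hρ₀ := hρ.nonneg
  calc (16 * r + 5 : ℝ) ^ d * ρ
    _ ≤ (16 * (r + 1)) ^ d * ρ := by gcongr; linarith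
    _ = 16 ^ d * ρ * ((r : ℝ) + 1) ^ d := by rw [mul_pow]; ring
    _ ≤ (16 ^ d + d : ℕ) * ρ * ((r : ℝ) + 1) ^ (16 ^ d + d) := by
      gcongr
      · exact_mod_cast Nat.le_add_right (16 ^ d) d
      · linarith [(Nat.cast_nonneg r : (0 : ℝ) ≤ r)]
      · exact Nat.le_add_left d (16 ^ d)
end

section
/- Let G be a finite graph, let t, ℓ ≥ 1 be integers, let F be an (ℓ,t)-shallow packing of G, and let H be the induced packing graph of F. Then |E(H)| ≤ (2·(t+1)²·ℓ²·∇_t(G) + ℓ)·|V(H)|. -/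
/-- The induced packing graph of a family `F` of vertex subsets of `G`: vertices are the
members of `F` (with multiplicity, via the index type), with an edge between two members if
they share a vertex or some vertex of one is adjacent in `G` to a vertex of the other. -/
def PackingGraph {V I : Type*} (G : SimpleGraph V) (F : I → Set V) : SimpleGraph I :=
  SimpleGraph.fromRel fun i j =>
    (F i ∩ F j).Nonempty ∨ ∃ u ∈ F i, ∃ v ∈ F j, G.Adj u v

/-!
Choose a center in every member of the packing and rank the members at random. Each vertex goes to
the first member containing it, and each member keeps what its center still reaches in at most `t`
steps through vertices of its own; the nonempty ones of these clusters are pairwise disjoint and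
`t`-shallow, so the minor they form has at most `∇_t(G) · |I|` edges.

Fix an ordered pair `(i, j)` of adjacent members such that the center of `j` is not in `F i`. Some
walk inside `F i` and some walk inside `F j` that avoids `F i`, starting at the two centers and of
length at most `t`, end in adjacent vertices. They have at most `2(t + 1)` vertices, hence meet at
most `2(t + 1)ℓ` members. With probability at least `1 / (2(t + 1)ℓ)²` the first of these members
is `i` and the second is `j`, and then both walks survive and `ij` is an edge of the minor. So there
are at most `(2(t + 1)ℓ)² · ∇_t(G) · |I|` such ordered pairs. The other ordered pairs number at
most `ℓ · |I|`, because each center lies in at most `ℓ` members, and every edge gives two pairs.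
-/

/-- The ball of radius `t` around `c` in the subgraph of `G` induced by `S`, as a set of vertices
of `G`. It is empty when `c ∉ S`. -/
def ballWithin {V : Type*} (G : SimpleGraph V) (S : Set V) (c : V) (t : ℕ) : Set V :=
  {v | ∃ p : G.Walk c v, p.length ≤ t ∧ ∀ w ∈ p.support, w ∈ S}

/-- The vertices of `F i` that lie in no member of `F` with priority higher than `i`, where `σ`
ranks the members and a smaller rank is a higher priority. -/
def territory {V I α : Type*} [LE α] (F : I → Set V) (σ : I → α) (i : I) : Set V :=
  {v | v ∈ F i ∧ ∀ k, v ∈ F k → σ i ≤ σ k}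

/-- The cluster grown by member `i` of the packing `F`: what its center `c i` reaches in at most
`t` steps inside its territory. It is empty when `i` does not own its center. -/
def territoryBall {V I α : Type*} [LE α] (G : SimpleGraph V) (F : I → Set V) (c : I → V)
    (t : ℕ) (σ : I → α) (i : I) : Set V :=
  ballWithin G (territory F σ i) (c i) t

/-- In the ranking `σ`, the element `i` precedes `j`, and no element of `K` other than `i`
precedes `j`; for `i, j ∈ K` this says that `i` is the first and `j` the second element of `K`. -/
def IsFirstTwo {I α : Type*} [LinearOrder α] (σ : I → α) (K : Finset I) (i j : I) : Prop :=
  σ i < σ j ∧ ∀ k ∈ K, k ≠ i → σ j ≤ σ k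

instance {I α : Type*} [DecidableEq I] [LinearOrder α] (σ : I → α) (K : Finset I) (i j : I) :
    Decidable (IsFirstTwo σ K i j) :=
  inferInstanceAs (Decidable (_ ∧ _))

section Balls

variable {V : Type*} {G : SimpleGraph V} {S A B : Set V} {a b c : V} {t : ℕ}

theorem ballWithin_subset : ballWithin G S c t ⊆ S :=
  fun _ ⟨p, _, hp⟩ => hp _ p.end_mem_support

theorem isShallowGraph_induce_ballWithin (h : (ballWithin G S c t).Nonempty) :
    IsShallowGraph (G.induce (ballWithin G S c t)) t := by
  classical
  have support_subset {v : V} (p : G.Walk c v) (hlen : p.length ≤ t)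
      (hp : ∀ w ∈ p.support, w ∈ S) : ∀ w ∈ p.support, w ∈ ballWithin G S c t := fun w hw =>
    ⟨p.takeUntil w hw, (p.length_takeUntil_le_length hw).trans hlen,
      fun x hx => hp x (p.support_takeUntil_subset_support hw hx)⟩
  obtain ⟨v₀, p₀, hlen₀, hp₀⟩ := h
  refine ⟨⟨c, support_subset p₀ hlen₀ hp₀ c p₀.start_mem_support⟩, ?_⟩
  rintro ⟨v, p, hlen, hp⟩
  let q := p.induce _ (support_subset p hlen hp)
  have hq : q.length = p.length := by
    rw [← SimpleGraph.Walk.length_map (SimpleGraph.Embedding.induce _).toHom q,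
      SimpleGraph.Walk.map_induce]
    rfl
  exact ⟨q.reachable, (SimpleGraph.dist_le q).trans (hq.trans_le hlen)⟩

theorem IsShallowGraph.exists_subset_ballWithin (h : IsShallowGraph (G.induce S) t) :
    ∃ c, S ⊆ ballWithin G S c t := by
  obtain ⟨c, hc⟩ := h
  refine ⟨c, fun v hv => ?_⟩
  obtain ⟨hreach, hdist⟩ := hc ⟨v, hv⟩
  obtain ⟨p, hp⟩ := hreach.exists_walk_length_eq_dist
  let f := (SimpleGraph.Embedding.induce (G := G) S).toHom
  refine ⟨p.map f, (p.length_map f).trans_le (hp.trans_le hdist), fun w hw => ?_⟩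
  obtain ⟨x, -, rfl⟩ := List.mem_map.1 (p.support_map f ▸ hw)
  exact x.2

theorem exists_walk_avoiding_adj (p : G.Walk b a) (hb : b ∉ A) (ha : a ∈ A) :
    ∃ u ∈ A, ∃ v, G.Adj u v ∧ ∃ q : G.Walk b v, q.length < p.length ∧
      ∀ w ∈ q.support, w ∈ p.support ∧ w ∉ A := by
  induction p with
  | nil => exact absurd ha hb
  | @cons b b' a hadj p ih =>
    by_cases hb' : b' ∈ A
    · exact ⟨b', hb', b, hadj.symm, .nil, by simp, by simp [hb]⟩
    · obtain ⟨u, hu, v, huv, q, hlen, hq⟩ := ih hb' ha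
      refine ⟨u, hu, v, huv, q.cons hadj, by simpa using hlen, ?_⟩
      simp only [SimpleGraph.Walk.support_cons, List.mem_cons]
      rintro w (rfl | hw)
      · exact ⟨.inl rfl, hb⟩
      · exact ⟨.inr (hq w hw).1, (hq w hw).2⟩

-- Walk from `b` inside `B` until just before entering `A`, even if `A` and `B` overlap.
theorem exists_walks_adj (hA : A ⊆ ballWithin G A a t) (hB : B ⊆ ballWithin G B b t) (hb : b ∉ A)
    (h : (A ∩ B).Nonempty ∨ ∃ u ∈ A, ∃ v ∈ B, G.Adj u v) :
    ∃ (u v : V) (p : G.Walk a u) (q : G.Walk b v), G.Adj u v ∧ p.length ≤ t ∧ q.length ≤ t ∧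
      (∀ w ∈ p.support, w ∈ A) ∧ ∀ w ∈ q.support, w ∈ B ∧ w ∉ A := by
  obtain ⟨x, hx, r, hlen, hr⟩ : ∃ x ∈ A, ∃ r : G.Walk b x, r.length ≤ t + 1 ∧
      ∀ w ∈ r.support, w ∉ A → w ∈ B := by
    rcases h with ⟨x, hxA, hxB⟩ | ⟨x, hxA, y, hyB, hxy⟩
    · obtain ⟨r, hlen, hr⟩ := hB hxB
      exact ⟨x, hxA, r, by lia, fun w hw _ => hr w hw⟩
    · obtain ⟨r, hlen, hr⟩ := hB hyB
      refine ⟨x, hxA, r.concat hxy.symm, by simpa using hlen, fun w hw hwA => ?_⟩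
      rw [SimpleGraph.Walk.support_concat, List.mem_append, List.mem_singleton] at hw
      rcases hw with hw | rfl
      · exact hr w hw
      · exact absurd hxA hwA
  obtain ⟨u, hu, v, huv, q, hqlen, hq⟩ := exists_walk_avoiding_adj r hb hx
  obtain ⟨p, hplen, hp⟩ := hA hu
  exact ⟨u, v, p, q, huv, hplen, by lia, hp, fun w hw =>
    ⟨hr w (hq w hw).1 (hq w hw).2, (hq w hw).2⟩⟩

end Balls

section Minors

variable {V W ι : Type*} {G : SimpleGraph V} {r : ℕ} {x : ℝ}

theorem IsShallowMinor.comap {W' : Type*} {H : SimpleGraph W} (h : IsShallowMinor G H r)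
    (f : W' ↪ W) : IsShallowMinor G (H.comap f) r := by
  obtain ⟨cl, hdisj, hshallow, hadj⟩ := h
  exact ⟨cl ∘ f, fun _ _ hne => hdisj (f.injective.ne hne), fun w => hshallow (f w),
    fun w w' hww' => hadj (f w) (f w') hww'⟩

/-- `NablaLE` only speaks of minors on vertex types in `Type`. -/
theorem NablaLE.ncard_edgeSet_le [Fintype W] (hx : NablaLE G r x) {H : SimpleGraph W}
    (hH : IsShallowMinor G H r) : (H.edgeSet.ncard : ℝ) ≤ x * Fintype.card W := by
  let e := (Fintype.equivFin W).symm
  have hcard : (H.comap e).edgeSet.ncard = H.edgeSet.ncard :=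
    Nat.card_congr (SimpleGraph.Iso.comap e H).mapEdgeSet
  simpa [hcard] using hx _ _ (hH.comap e.toEmbedding)

theorem packingGraph_adj {F : ι → Set V} {i j : ι} :
    (PackingGraph G F).Adj i j ↔
      i ≠ j ∧ ((F i ∩ F j).Nonempty ∨ ∃ u ∈ F i, ∃ v ∈ F j, G.Adj u v) := by
  refine and_congr_right fun _ => or_iff_left_of_imp ?_
  rintro (h | ⟨v, hv, u, hu, hadj⟩)
  · exact .inl (Set.inter_comm _ _ ▸ h)
  · exact .inr ⟨u, hu, v, hv, hadj.symm⟩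

theorem isShallowMinor_packingGraph {cl : ι → Set V}
    (hdisj : Pairwise fun i j => Disjoint (cl i) (cl j))
    (hshallow : ∀ i, IsShallowGraph (G.induce (cl i)) r) :
    IsShallowMinor G (PackingGraph G cl) r := by
  refine ⟨cl, hdisj, hshallow, fun i j hij => ?_⟩
  obtain ⟨hne, hinter | hadj⟩ := packingGraph_adj.1 hij
  · exact absurd (hdisj hne) (Set.not_disjoint_iff_nonempty_inter.2 hinter)
  · exact hadj

theorem NablaLE.nonneg [Nonempty V] (hx : NablaLE G r x) : 0 ≤ x := by
  obtain ⟨v⟩ := ‹Nonempty V›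
  have hball : (ballWithin G {v} v r).Nonempty := ⟨v, .nil, by simp, by simp⟩
  have hminor := isShallowMinor_packingGraph (G := G) (r := r)
    (cl := fun _ : Unit => ballWithin G {v} v r) Subsingleton.pairwise
    fun _ => isShallowGraph_induce_ballWithin hball
  have hle := hx.ncard_edgeSet_le hminor
  rw [Fintype.card_unit, Nat.cast_one, mul_one] at hle
  exact (Nat.cast_nonneg _).trans hle

theorem NablaLE.ncard_edgeSet_packingGraph_le [Nonempty V] [Fintype ι] (hx : NablaLE G r x)
    {cl : ι → Set V} (hdisj : Pairwise fun i j => Disjoint (cl i) (cl j))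
    (hshallow : ∀ i, (cl i).Nonempty → IsShallowGraph (G.induce (cl i)) r) :
    ((PackingGraph G cl).edgeSet.ncard : ℝ) ≤ x * Fintype.card ι := by
  classical
  let s : Set ι := {i | (cl i).Nonempty}
  have hsupport : (PackingGraph G cl).support ⊆ s := by
    rintro i ⟨j, hij⟩
    obtain ⟨-, ⟨v, hv, -⟩ | ⟨v, hv, -⟩⟩ := packingGraph_adj.1 hij <;> exact ⟨v, hv⟩
  have hcard : ((PackingGraph G cl).induce s).edgeSet.ncard =
      (PackingGraph G cl).edgeSet.ncard := by
    rw [Set.ncard_eq_toFinset_card', Set.ncard_eq_toFinset_card']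
    exact SimpleGraph.card_edgeFinset_induce_of_support_subset hsupport
  have hinduce : (PackingGraph G cl).induce s = PackingGraph G fun i : s => cl i := by
    ext i j
    simp only [SimpleGraph.comap_adj, packingGraph_adj, Function.Embedding.subtype_apply,
      ne_eq, Subtype.ext_iff]
  have hminor : IsShallowMinor G (PackingGraph G fun i : s => cl i) r :=
    isShallowMinor_packingGraph (fun _ _ hne => hdisj (Subtype.coe_injective.ne hne))
      fun i => hshallow i i.2
  calc ((PackingGraph G cl).edgeSet.ncard : ℝ)
      = (PackingGraph G fun i : s => cl i).edgeSet.ncard := by rw [← hcard, hinduce]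
    _ ≤ x * Fintype.card s := hx.ncard_edgeSet_le hminor
    _ ≤ x * Fintype.card ι :=
        mul_le_mul_of_nonneg_left (mod_cast Fintype.card_subtype_le _) hx.nonneg

end Minors

section FirstTwo

open Finset

variable {ι α : Type*} [LinearOrder α] {K : Finset ι} {i j : ι}

theorem exists_isFirstTwo {σ : ι → α} (hσ : Function.Injective σ)
    (hK : K.Nontrivial) : ∃ p ∈ K.offDiag, IsFirstTwo σ K p.1 p.2 := by
  classical
  obtain ⟨a, ha, ha_min⟩ := K.exists_min_image σ hK.nonempty
  obtain ⟨b, hb, hb_min⟩ := (K.erase a).exists_min_image σ hK.erase_nonempty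
  obtain ⟨hba, hbK⟩ := mem_erase.1 hb
  exact ⟨(a, b), mem_offDiag.2 ⟨ha, hbK, hba.symm⟩,
    (ha_min b hbK).lt_of_ne (hσ.ne hba.symm), fun k hk hka => hb_min k (mem_erase.2 ⟨hka, hk⟩)⟩

theorem exists_perm_apply_eq_apply_eq {a b : ι} (hi : i ∈ K) (hj : j ∈ K) (hij : i ≠ j)
    (ha : a ∈ K) (hb : b ∈ K) (hab : a ≠ b) :
    ∃ π : Equiv.Perm ι, π i = a ∧ π j = b ∧ ∀ k ∈ K, π k ∈ K := by
  classical
  have hij' : (⟨i, hi⟩ : K) ≠ ⟨j, hj⟩ := mt (congrArg Subtype.val) hij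
  have hab' : (⟨a, ha⟩ : K) ≠ ⟨b, hb⟩ := mt (congrArg Subtype.val) hab
  obtain ⟨g, hgi, hgj⟩ :=
    MulAction.is_two_pretransitive_iff.1 (Equiv.Perm.isMultiplyPretransitive K 2) hij' hab'
  refine ⟨Equiv.Perm.ofSubtype g, ?_, ?_, fun k hk => ?_⟩
  · rw [Equiv.Perm.ofSubtype_apply_of_mem g hi]
    exact congrArg Subtype.val hgi
  · rw [Equiv.Perm.ofSubtype_apply_of_mem g hj]
    exact congrArg Subtype.val hgj
  · rw [Equiv.Perm.ofSubtype_apply_of_mem g hk]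
    exact (g _).2

theorem IsFirstTwo.comp_perm {a b : ι} {σ : ι → α} (h : IsFirstTwo σ K a b) {π : Equiv.Perm ι}
    (hπi : π i = a) (hπj : π j = b) (hπK : ∀ k ∈ K, π k ∈ K) : IsFirstTwo (σ ∘ π) K i j := by
  subst hπi hπj
  exact ⟨h.1, fun k hk hki => h.2 (π k) (hπK k hk) (π.injective.ne hki)⟩

variable [DecidableEq ι]

theorem card_filter_isFirstTwo_le [Fintype ι] [Fintype α] {a b : ι} (hi : i ∈ K)
    (hj : j ∈ K) (hij : i ≠ j) (ha : a ∈ K) (hb : b ∈ K) (hab : a ≠ b) :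
    #{σ : ι ≃ α | IsFirstTwo σ K a b} ≤ #{σ : ι ≃ α | IsFirstTwo σ K i j} := by
  obtain ⟨π, hπi, hπj, hπK⟩ := exists_perm_apply_eq_apply_eq hi hj hij ha hb hab
  refine card_le_card_of_injOn π.trans (fun σ hσ => ?_) (fun σ _ τ _ h => ?_)
  · simp only [coe_filter, mem_univ, true_and, Set.mem_ofPred_eq] at hσ ⊢
    exact hσ.comp_perm hπi hπj hπK
  · exact (Equiv.equivCongr π.symm (Equiv.refl α)).injective h

theorem card_equiv_le_sq_mul_card_filter_isFirstTwo [Fintype ι] [Fintype α]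
    (hi : i ∈ K) (hj : j ∈ K) (hij : i ≠ j) :
    Fintype.card (ι ≃ α) ≤ #K ^ 2 * #{σ : ι ≃ α | IsFirstTwo σ K i j} := by
  have hcover : univ ⊆ K.offDiag.biUnion fun p => {σ : ι ≃ α | IsFirstTwo σ K p.1 p.2} := by
    intro σ _
    simpa only [mem_biUnion, mem_filter, mem_univ, true_and] using
      exists_isFirstTwo σ.injective ⟨i, hi, j, hj, hij⟩
  have hoffDiag : #K.offDiag ≤ #K ^ 2 := by
    rw [offDiag_card, sq]
    exact Nat.sub_le _ _
  calc Fintype.card (ι ≃ α)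
      ≤ #(K.offDiag.biUnion fun p => {σ : ι ≃ α | IsFirstTwo σ K p.1 p.2}) := card_le_card hcover
    _ ≤ #K.offDiag * #{σ : ι ≃ α | IsFirstTwo σ K i j} :=
        card_biUnion_le_card_mul _ _ _ fun p hp => by
          obtain ⟨ha, hb, hab⟩ := mem_offDiag.1 hp
          exact card_filter_isFirstTwo_le hi hj hij ha hb hab
    _ ≤ #K ^ 2 * #{σ : ι ≃ α | IsFirstTwo σ K i j} := Nat.mul_le_mul_right _ hoffDiag

/-- First-moment method: some ranking does at least as well as a random one. -/
theorem exists_equiv_card_le_sq_mul_card_filter_isFirstTwo [Finite ι] [Nonempty (ι ≃ α)]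
    (D : Finset (ι × ι)) (K : ι × ι → Finset ι) (m : ℕ)
    (hK : ∀ p ∈ D, p.1 ≠ p.2 ∧ p.1 ∈ K p ∧ p.2 ∈ K p ∧ #(K p) ≤ m) :
    ∃ σ : ι ≃ α, #D ≤ m ^ 2 * #{p ∈ D | IsFirstTwo σ (K p) p.1 p.2} := by
  have := Fintype.ofFinite ι
  have := Fintype.ofEquiv ι (Classical.arbitrary (ι ≃ α))
  suffices h : ∑ _σ : ι ≃ α, #D ≤ ∑ σ : ι ≃ α, m ^ 2 * #{p ∈ D | IsFirstTwo σ (K p) p.1 p.2} by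
    obtain ⟨σ, -, hσ⟩ := exists_le_of_sum_le univ_nonempty h
    exact ⟨σ, hσ⟩
  calc ∑ _σ : ι ≃ α, #D
      = ∑ _p ∈ D, Fintype.card (ι ≃ α) := by
        rw [sum_const, sum_const, smul_eq_mul, smul_eq_mul, mul_comm, card_univ]
    _ ≤ ∑ p ∈ D, m ^ 2 * #{σ : ι ≃ α | IsFirstTwo σ (K p) p.1 p.2} := by
        refine sum_le_sum fun p hp => ?_
        obtain ⟨hne, hi, hj, hm⟩ := hK p hp
        exact (card_equiv_le_sq_mul_card_filter_isFirstTwo hi hj hne).trans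
          (Nat.mul_le_mul_right _ (Nat.pow_le_pow_left hm 2))
    _ = ∑ σ : ι ≃ α, m ^ 2 * #{p ∈ D | IsFirstTwo σ (K p) p.1 p.2} := by
        rw [← mul_sum, ← mul_sum]
        exact congrArg _ (sum_card_bipartiteAbove_eq_sum_card_bipartiteBelow
          fun p (σ : ι ≃ α) => IsFirstTwo σ (K p) p.1 p.2)

end FirstTwo

section Pairs

open Finset

variable {ι α : Type*}

theorem card_filter_prod_le_mul_card [Fintype ι] {R : ι → ι → Prop} [DecidableRel R] {m : ℕ}
    (hR : ∀ j, #{i | R i j} ≤ m) : #{p : ι × ι | R p.1 p.2} ≤ m * Fintype.card ι := by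
  rw [card_filter, Fintype.sum_prod_type_right, mul_comm, ← smul_eq_mul, ← card_univ]
  refine sum_le_card_nsmul _ _ _ fun j _ => ?_
  rw [← card_filter]
  exact hR j

theorem two_mul_ncard_edgeSet [Fintype ι] (H : SimpleGraph ι) [DecidableRel H.Adj] :
    2 * H.edgeSet.ncard = #{p : ι × ι | H.Adj p.1 p.2} := by
  classical
  rw [Set.ncard_eq_toFinset_card']
  exact H.two_mul_card_edgeFinset

theorem card_le_ncard_edgeSet_of_lt [Finite ι] [Preorder α] (H : SimpleGraph ι)
    (σ : ι → α) {P : Finset (ι × ι)} (hP : ∀ p ∈ P, σ p.1 < σ p.2 ∧ H.Adj p.1 p.2) :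
    #P ≤ H.edgeSet.ncard := by
  rw [← Set.ncard_coe_finset]
  refine Set.ncard_le_ncard_of_injOn (fun p => s(p.1, p.2)) (fun p hp => (hP p hp).2) ?_
    (Set.toFinite _)
  rintro ⟨i, j⟩ hp ⟨i', j'⟩ hq heq
  rcases Sym2.eq_iff.1 heq with ⟨rfl, rfl⟩ | ⟨rfl, rfl⟩
  · rfl
  · exact absurd (hP _ hp).1 (hP _ hq).1.not_gt

end Pairs

section Territories

open Finset

variable {V I α : Type*} {G : SimpleGraph V} {F : I → Set V} {c : I → V} {t ℓ : ℕ} {i j : I}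

theorem pairwise_disjoint_territory [PartialOrder α] {σ : I → α} (hσ : Function.Injective σ) :
    Pairwise fun i j => Disjoint (territory F σ i) (territory F σ j) := fun i j hne =>
  Set.disjoint_left.2 fun _ hi hj => hne (hσ ((hi.2 j hj.1).antisymm (hj.2 i hi.1)))

theorem NablaLE.ncard_edgeSet_territoryBall_le [Nonempty V] [Fintype I] [PartialOrder α] {x : ℝ}
    (hx : NablaLE G t x) {σ : I → α} (hσ : Function.Injective σ) :
    ((PackingGraph G (territoryBall G F c t σ)).edgeSet.ncard : ℝ) ≤ x * Fintype.card I :=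
  hx.ncard_edgeSet_packingGraph_le
    (fun _ _ hne => (pairwise_disjoint_territory hσ hne).mono ballWithin_subset ballWithin_subset)
    fun _ => isShallowGraph_induce_ballWithin

variable [LinearOrder α] {σ : I → α} {K : Finset I} {v : V}

theorem IsFirstTwo.mem_territory_left (h : IsFirstTwo σ K i j) (hK : ∀ k, v ∈ F k → k ∈ K)
    (hv : v ∈ F i) : v ∈ territory F σ i := by
  refine ⟨hv, fun k hk => ?_⟩
  rcases eq_or_ne k i with rfl | hki
  · exact le_rfl
  · exact h.1.le.trans (h.2 k (hK k hk) hki)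

theorem IsFirstTwo.mem_territory_right (h : IsFirstTwo σ K i j) (hK : ∀ k, v ∈ F k → k ∈ K)
    (hv : v ∈ F j) (hvi : v ∉ F i) : v ∈ territory F σ j :=
  ⟨hv, fun k hk => h.2 k (hK k hk) fun hki => hvi (hki ▸ hk)⟩

theorem exists_finset_card_le_mul_forall_mem [Finite I] (hpack : ∀ v, {i | v ∈ F i}.ncard ≤ ℓ)
    (X : Finset V) : ∃ K : Finset I, #K ≤ #X * ℓ ∧ ∀ v ∈ X, ∀ k, v ∈ F k → k ∈ K := by
  classical
  have := Fintype.ofFinite I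
  refine ⟨X.biUnion fun v => {k | v ∈ F k}, card_biUnion_le_card_mul _ _ _ fun v _ => ?_, ?_⟩
  · simpa only [Set.ncard_eq_toFinset_card', Set.toFinset_ofPred] using hpack v
  · intro v hv k hk
    exact mem_biUnion.2 ⟨v, hv, mem_filter.2 ⟨mem_univ k, hk⟩⟩

/-- The edge `ij` survives in the minor as soon as `i` and `j` beat the few members that meet
two walks joining their centers. -/
theorem exists_finset_forall_isFirstTwo_adj [Finite I] (hpack : ∀ v, {i | v ∈ F i}.ncard ≤ ℓ)
    (hc : ∀ i, F i ⊆ ballWithin G (F i) (c i) t) (hij : (PackingGraph G F).Adj i j)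
    (hcj : c j ∉ F i) :
    ∃ K : Finset I, i ∈ K ∧ j ∈ K ∧ #K ≤ 2 * (t + 1) * ℓ ∧ ∀ σ : I → α,
      IsFirstTwo σ K i j → (PackingGraph G (territoryBall G F c t σ)).Adj i j := by
  classical
  obtain ⟨hne, hmeet⟩ := packingGraph_adj.1 hij
  obtain ⟨u, v, p, q, huv, hplen, hqlen, hp, hq⟩ := exists_walks_adj (hc i) (hc j) hcj hmeet
  obtain ⟨K, hKcard, hK⟩ :=
    exists_finset_card_le_mul_forall_mem hpack (p.support.toFinset ∪ q.support.toFinset)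
  have hKp (w : V) (hw : w ∈ p.support) : ∀ k, w ∈ F k → k ∈ K :=
    hK w (mem_union_left _ (List.mem_toFinset.2 hw))
  have hKq (w : V) (hw : w ∈ q.support) : ∀ k, w ∈ F k → k ∈ K :=
    hK w (mem_union_right _ (List.mem_toFinset.2 hw))
  have hsupport : #(p.support.toFinset ∪ q.support.toFinset) ≤ 2 * (t + 1) := by
    have hunion := card_union_le p.support.toFinset q.support.toFinset
    have hpcard := p.support.toFinset_card_le
    have hqcard := q.support.toFinset_card_le
    rw [SimpleGraph.Walk.length_support] at hpcard hqcard
    lia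
  refine ⟨K, hKp _ p.start_mem_support i (hp _ p.start_mem_support),
    hKq _ q.start_mem_support j (hq _ q.start_mem_support).1,
    hKcard.trans (Nat.mul_le_mul_right _ hsupport), fun σ hσ => packingGraph_adj.2
    ⟨hne, .inr ⟨u, ⟨p, hplen, fun w hw => ?_⟩, v, ⟨q, hqlen, fun w hw => ?_⟩, huv⟩⟩⟩
  · exact hσ.mem_territory_left (hKp w hw) (hp w hw)
  · exact hσ.mem_territory_right (hKq w hw) (hq w hw).1 (hq w hw).2

open Classical in
theorem NablaLE.card_filter_packingGraph_adj_le [Nonempty V] [Fintype I] {x : ℝ}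
    (hx : NablaLE G t x) (hpack : ∀ v, {i | v ∈ F i}.ncard ≤ ℓ)
    (hc : ∀ i, F i ⊆ ballWithin G (F i) (c i) t) :
    (#{p : I × I | (PackingGraph G F).Adj p.1 p.2 ∧ c p.2 ∉ F p.1} : ℝ) ≤
      (2 * (t + 1) * ℓ) ^ 2 * (x * Fintype.card I) := by
  set D : Finset (I × I) := {p | (PackingGraph G F).Adj p.1 p.2 ∧ c p.2 ∉ F p.1}
  have hD : ∀ p ∈ D, (PackingGraph G F).Adj p.1 p.2 ∧ c p.2 ∉ F p.1 := fun p hp =>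
    (mem_filter.1 hp).2
  choose! K hiK hjK hKcard hKadj using fun p hp =>
    exists_finset_forall_isFirstTwo_adj (α := Fin (Fintype.card I)) hpack hc (hD p hp).1 (hD p hp).2
  have : Nonempty (I ≃ Fin (Fintype.card I)) := ⟨Fintype.equivFin I⟩
  obtain ⟨σ, hσ⟩ := exists_equiv_card_le_sq_mul_card_filter_isFirstTwo
    (α := Fin (Fintype.card I)) D K (2 * (t + 1) * ℓ)
    fun p hp => ⟨(hD p hp).1.ne, hiK p hp, hjK p hp, hKcard p hp⟩
  have hedges : #{p ∈ D | IsFirstTwo σ (K p) p.1 p.2} ≤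
      (PackingGraph G (territoryBall G F c t σ)).edgeSet.ncard :=
    card_le_ncard_edgeSet_of_lt _ σ fun p hp => by
      obtain ⟨hpD, hfirst⟩ := mem_filter.1 hp
      exact ⟨hfirst.1, hKadj p hpD σ hfirst⟩
  calc (#D : ℝ)
      ≤ (2 * (t + 1) * ℓ) ^ 2 * (PackingGraph G (territoryBall G F c t σ)).edgeSet.ncard :=
        mod_cast hσ.trans (Nat.mul_le_mul_left _ hedges)
    _ ≤ (2 * (t + 1) * ℓ) ^ 2 * (x * Fintype.card I) := by
        gcongr
        exact hx.ncard_edgeSet_territoryBall_le σ.injective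

variable (c) in
open Classical in
theorem two_mul_ncard_edgeSet_packingGraph_le [Fintype I]
    (hpack : ∀ v, {i | v ∈ F i}.ncard ≤ ℓ) :
    2 * (PackingGraph G F).edgeSet.ncard ≤
      #{p : I × I | (PackingGraph G F).Adj p.1 p.2 ∧ c p.2 ∉ F p.1} + ℓ * Fintype.card I := by
  have hpairs : #{p : I × I | c p.2 ∈ F p.1} ≤ ℓ * Fintype.card I :=
    card_filter_prod_le_mul_card (R := fun i j => c j ∈ F i) fun j => by
      simpa only [Set.ncard_eq_toFinset_card', Set.toFinset_ofPred] using hpack (c j)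
  rw [two_mul_ncard_edgeSet]
  refine (card_le_card fun p hp => ?_).trans
    ((card_union_le _ _).trans (Nat.add_le_add_left hpairs _))
  by_cases hcp : c p.2 ∈ F p.1
  · exact mem_union_right _ (mem_filter.2 ⟨mem_univ p, hcp⟩)
  · exact mem_union_left _ (mem_filter.2 ⟨mem_univ p, (mem_filter.1 hp).2, hcp⟩)

end Territories

theorem stmt12_general {V I : Type*} [Fintype I] (G : SimpleGraph V) (t ℓ : ℕ) (F : I → Set V)
    (hshallow : ∀ i, IsShallowGraph (G.induce (F i)) t)
    (hpack : ∀ v : V, ({i | v ∈ F i}).ncard ≤ ℓ)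
    (x : ℝ) (hx : NablaLE G t x) :
    ((PackingGraph G F).edgeSet.ncard : ℝ) ≤
      (2 * ((t : ℝ) + 1) ^ 2 * (ℓ : ℝ) ^ 2 * x + (ℓ : ℝ) / 2) * (Fintype.card I : ℝ) := by
  classical
  choose c hc using fun i => (hshallow i).exists_subset_ballWithin
  rcases isEmpty_or_nonempty I with hI | ⟨⟨i⟩⟩
  · simp [Set.eq_empty_of_isEmpty (PackingGraph G F).edgeSet]
  have : Nonempty V := ⟨c i⟩
  have hgood := hx.card_filter_packingGraph_adj_le hpack hc
  have hsplit : 2 * ((PackingGraph G F).edgeSet.ncard : ℝ) ≤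
      Finset.card {p : I × I | (PackingGraph G F).Adj p.1 p.2 ∧ c p.2 ∉ F p.1} +
        ℓ * Fintype.card I :=
    mod_cast two_mul_ncard_edgeSet_packingGraph_le c hpack
  linarith

/-- for an `(ℓ,t)`-shallow packing `F` of a finite graph `G`, the induced
packing graph `H` satisfies `|E(H)| ≤ (2(t+1)²ℓ²∇_t(G) + ℓ)·|V(H)|`. -/
theorem stmt12 {V I : Type} [Fintype V] [Fintype I] (G : SimpleGraph V)
    (t ℓ : ℕ) (ht : 1 ≤ t) (hℓ : 1 ≤ ℓ) (F : I → Set V)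
    (hshallow : ∀ i, IsShallowGraph (G.induce (F i)) t)
    (hpack : ∀ v : V, ({i | v ∈ F i}).ncard ≤ ℓ)
    (x : ℝ) (hx : NablaLE G t x) :
    ((PackingGraph G F).edgeSet.ncard : ℝ) ≤
      (2 * ((t : ℝ) + 1) ^ 2 * (ℓ : ℝ) ^ 2 * x + (ℓ : ℝ)) * (Fintype.card I : ℝ) := by
  refine (stmt12_general G t ℓ F hshallow hpack x hx).trans ?_
  gcongr
  exact half_le_self ℓ.cast_nonneg
end
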